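/- Let T be an invertible n×n real matrix with T x = e₁ and T y = e_n (where e₁ and e_n are the first and last standard basis vectors of ℝⁿ), and assume the Gohberg–Semencul identity T⁻¹ = GSF(x,y) holds. Let x̃, ỹ ∈ ℝⁿ with first entry ξ̃₀ of x̃ nonzero, let ε > 0 satisfy ‖x̃ − x‖₁ ≤ ε‖x‖₁ and ‖ỹ − y‖₁ ≤ ε‖y‖₁, and set ε̃ = |1/ξ₀ − 1/ξ̃₀| / |1/ξ₀|, where ξ₀ ≠ 0 is the first entry of x. Then ‖T⁻¹ − GSF(x̃,ỹ)‖₂ / ‖T⁻¹‖₂ ≤ (2√n/|ξ₀|)·[ε + (ε + (1+ε)ε̃)(1+ε)]·min{‖x‖₁, ‖y‖₁}. -/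

import Mathlib

/-!
The first and last columns of `T⁻¹` are `x` and `y`, so both have `ℓ²` norm at most `‖T⁻¹‖₂`, and
`‖x‖₁‖y‖₁ = min · max ≤ min(‖x‖₁, ‖y‖₁) · √n · ‖T⁻¹‖₂` by Cauchy–Schwarz. It therefore suffices to
bound `‖GSF(x,y) - GSF(x̃,ỹ)‖₂` by `2|ξ₀|⁻¹ [ε + (ε + (1+ε)ε̃)(1+ε)] ‖x‖₁‖y‖₁`.

Each of the two products in the Gohberg–Semencul expression contributes one half of this bound,
by telescoping (`norm_prod_diff_le`). This uses that the four Toeplitz matrices depend linearly on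
their generating vector and have spectral norm at most the `ℓ¹` norm of that vector. The latter
follows from the Schur test (`matNorm2_le_of_sums`), since every row and every column lists distinct
entries of the generating vector, padded by zeros.
-/

open Matrix

noncomputable section

/-- ℓ¹ norm of a vector. -/
def vecNorm1 {n : ℕ} (x : Fin n → ℝ) : ℝ := ∑ i, |x i|

/-- ℓ² norm of a vector. -/
def vecNorm2 {n : ℕ} (x : Fin n → ℝ) : ℝ := Real.sqrt (∑ i, (x i) ^ 2)

/-- Matrix operator norm induced by the ℓ¹ vector norm (max absolute column sum). -/
def matNorm1 {n : ℕ} (M : Matrix (Fin n) (Fin n) ℝ) : ℝ := ⨆ j, ∑ i, |M i j|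

/-- Matrix operator norm induced by the ℓ∞ vector norm (max absolute row sum). -/
def matNormInf {n : ℕ} (M : Matrix (Fin n) (Fin n) ℝ) : ℝ := ⨆ i, ∑ j, |M i j|

/-- Spectral norm: operator norm induced by the ℓ² vector norm. -/
def matNorm2 {n : ℕ} (M : Matrix (Fin n) (Fin n) ℝ) : ℝ :=
  ‖Matrix.toEuclideanCLM (𝕜 := ℝ) M‖

/-- The last index of `Fin n`. -/
def lastIdx (n : ℕ) [NeZero n] : Fin n := ⟨n - 1, by have := Nat.pos_of_neZero n; omega⟩

/-- Lower triangular Toeplitz matrix built from `x`. -/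
def Lmat {n : ℕ} (x : Fin n → ℝ) : Matrix (Fin n) (Fin n) ℝ :=
  Matrix.of fun i j =>
    if (j : ℕ) ≤ i then x ⟨(i : ℕ) - j, lt_of_le_of_lt (Nat.sub_le _ _) i.isLt⟩ else 0

/-- Upper triangular Toeplitz matrix built from `y`. -/
def Rmat {n : ℕ} (y : Fin n → ℝ) : Matrix (Fin n) (Fin n) ℝ :=
  Matrix.of fun i j =>
    if (i : ℕ) ≤ j then y ⟨n - 1 - ((j : ℕ) - i), by have := i.isLt; omega⟩ else 0

/-- Strictly lower triangular Toeplitz matrix built from `y`. -/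
def L0mat {n : ℕ} (y : Fin n → ℝ) : Matrix (Fin n) (Fin n) ℝ :=
  Matrix.of fun i j =>
    if (j : ℕ) < i then y ⟨(i : ℕ) - j - 1, by have := i.isLt; omega⟩ else 0

/-- Strictly upper triangular Toeplitz matrix built from `x`. -/
def R0mat {n : ℕ} (x : Fin n → ℝ) : Matrix (Fin n) (Fin n) ℝ :=
  Matrix.of fun i j =>
    if h : (i : ℕ) < j then x ⟨n - ((j : ℕ) - i), by have := j.isLt; omega⟩ else 0

/-- The Gohberg–Semencul expression. -/
def GSF {n : ℕ} [NeZero n] (x y : Fin n → ℝ) : Matrix (Fin n) (Fin n) ℝ :=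
  (x 0)⁻¹ • (Lmat x * Rmat y - L0mat y * R0mat x)

/-- Schur test: absolute row and column sums bounded by `c` bound the spectral norm by `c`. -/
theorem matNorm2_le_of_sums {n : ℕ} (A : Matrix (Fin n) (Fin n) ℝ) (c : ℝ) (hc : 0 ≤ c)
    (hr : ∀ i, ∑ j, |A i j| ≤ c) (hcol : ∀ j, ∑ i, |A i j| ≤ c) : matNorm2 A ≤ c := by
  unfold matNorm2
  refine ContinuousLinearMap.opNorm_le_bound _ hc fun v => ?_
  rw [← sq_le_sq₀ (norm_nonneg _) (by positivity), mul_pow, EuclideanSpace.norm_sq_eq,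
    EuclideanSpace.norm_sq_eq]
  simp only [Matrix.ofLp_toEuclideanCLM, Matrix.mulVec, dotProduct, Real.norm_eq_abs, sq_abs]
  have key : ∀ i, (∑ j, A i j * v j) ^ 2 ≤ c * ∑ j, |A i j| * (v j) ^ 2 := by
    intro i
    -- weighted Cauchy–Schwarz, with the weights `|A i j|`
    have h := Finset.sum_sq_le_sum_mul_sum_of_sq_le_mul Finset.univ
      (r := fun j => A i j * v j) (f := fun j => |A i j|) (g := fun j => |A i j| * (v j) ^ 2)
      (fun j _ => abs_nonneg _) (fun j _ => by positivity)
      (fun j _ => by rw [mul_pow, ← sq_abs (A i j)]; exact le_of_eq (by ring))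
    exact h.trans (mul_le_mul_of_nonneg_right (hr i)
      (Finset.sum_nonneg fun j _ => by positivity))
  calc ∑ i, (∑ j, A i j * v j) ^ 2 ≤ ∑ i, c * ∑ j, |A i j| * (v j) ^ 2 :=
        Finset.sum_le_sum fun i _ => key i
    _ = c * ∑ j, (∑ i, |A i j|) * (v j) ^ 2 := by
        rw [← Finset.mul_sum, Finset.sum_comm]
        simp only [Finset.sum_mul]
    _ ≤ c * ∑ j, c * (v j) ^ 2 := by
        gcongr with j _
        exact hcol j
    _ = c ^ 2 * ∑ j, (v j) ^ 2 := by rw [← Finset.mul_sum]; ring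

theorem vecNorm1_nonneg {n : ℕ} (x : Fin n → ℝ) : 0 ≤ vecNorm1 x :=
  Finset.sum_nonneg fun _ _ => abs_nonneg _

/-- A family listing distinct entries of `x`, padded by zeros, has `ℓ¹` norm at most `‖x‖₁`. The
position `f j` of the entry used at `j` only matters where `p j` holds. -/
theorem sum_abs_le_vecNorm1 {n : ℕ} (x a : Fin n → ℝ) (p : Fin n → Prop) (f : Fin n → ℕ)
    (hlt : ∀ j, p j → f j < n) (hinj : ∀ j k, p j → p k → f j = f k → j = k)
    (ha : ∀ j (h : p j), a j = x ⟨f j, hlt j h⟩) (h0 : ∀ j, ¬ p j → a j = 0) :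
    ∑ j, |a j| ≤ vecNorm1 x := by
  classical
  calc ∑ j, |a j| = ∑ j with p j, |a j| := by
        refine (Finset.sum_filter_of_ne fun j _ hj => ?_).symm
        by_contra hp
        exact hj (by simp [h0 j hp])
    _ = ∑ j : {j // p j}, |a j| := by
        rw [Finset.sum_subtype (p := p)]; simp
    _ = ∑ j : {j // p j}, |x ⟨f j, hlt j j.2⟩| :=
        Finset.sum_congr rfl fun j _ => by rw [ha j j.2]
    _ = ∑ k ∈ Finset.univ.image fun j : {j // p j} => (⟨f j, hlt j j.2⟩ : Fin n), |x k| := by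
        rw [Finset.sum_image]
        intro j _ k _ e
        exact Subtype.ext (hinj j k j.2 k.2 (congrArg Fin.val e))
    _ ≤ vecNorm1 x :=
        Finset.sum_le_sum_of_subset_of_nonneg (Finset.subset_univ _) fun _ _ _ => abs_nonneg _

theorem matNorm2_Lmat {n : ℕ} (x : Fin n → ℝ) : matNorm2 (Lmat x) ≤ vecNorm1 x := by
  refine matNorm2_le_of_sums _ _ (vecNorm1_nonneg x) (fun i => ?_) (fun j => ?_)
  · exact sum_abs_le_vecNorm1 x _ (fun j => (j : ℕ) ≤ i) (fun j => (i : ℕ) - j)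
      (fun j h => by omega) (fun j k h h' e => by ext; omega)
      (fun _ h => if_pos h) (fun _ h => if_neg h)
  · exact sum_abs_le_vecNorm1 x _ (fun i => (j : ℕ) ≤ i) (fun i => (i : ℕ) - j)
      (fun j h => by omega) (fun j k h h' e => by ext; omega)
      (fun _ h => if_pos h) (fun _ h => if_neg h)

theorem matNorm2_Rmat {n : ℕ} (y : Fin n → ℝ) : matNorm2 (Rmat y) ≤ vecNorm1 y := by
  refine matNorm2_le_of_sums _ _ (vecNorm1_nonneg y) (fun i => ?_) (fun j => ?_)
  · exact sum_abs_le_vecNorm1 y _ (fun j => (i : ℕ) ≤ j) (fun j => n - 1 - ((j : ℕ) - i))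
      (fun j h => by omega) (fun j k h h' e => by ext; omega)
      (fun _ h => if_pos h) (fun _ h => if_neg h)
  · exact sum_abs_le_vecNorm1 y _ (fun i => (i : ℕ) ≤ j) (fun i => n - 1 - ((j : ℕ) - i))
      (fun j h => by omega) (fun j k h h' e => by ext; omega)
      (fun _ h => if_pos h) (fun _ h => if_neg h)

theorem matNorm2_L0mat {n : ℕ} (y : Fin n → ℝ) : matNorm2 (L0mat y) ≤ vecNorm1 y := by
  refine matNorm2_le_of_sums _ _ (vecNorm1_nonneg y) (fun i => ?_) (fun j => ?_)
  · exact sum_abs_le_vecNorm1 y _ (fun j => (j : ℕ) < i) (fun j => (i : ℕ) - j - 1)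
      (fun j h => by omega) (fun j k h h' e => by ext; omega)
      (fun _ h => if_pos h) (fun _ h => if_neg h)
  · exact sum_abs_le_vecNorm1 y _ (fun i => (j : ℕ) < i) (fun i => (i : ℕ) - j - 1)
      (fun j h => by omega) (fun j k h h' e => by ext; omega)
      (fun _ h => if_pos h) (fun _ h => if_neg h)

theorem matNorm2_R0mat {n : ℕ} (x : Fin n → ℝ) : matNorm2 (R0mat x) ≤ vecNorm1 x := by
  refine matNorm2_le_of_sums _ _ (vecNorm1_nonneg x) (fun i => ?_) (fun j => ?_)
  · exact sum_abs_le_vecNorm1 x _ (fun j => (i : ℕ) < j) (fun j => n - ((j : ℕ) - i))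
      (fun j h => by omega) (fun j k h h' e => by ext; omega)
      (fun _ h => dif_pos h) (fun _ h => dif_neg h)
  · exact sum_abs_le_vecNorm1 x _ (fun i => (i : ℕ) < j) (fun i => n - ((j : ℕ) - i))
      (fun j h => by omega) (fun j k h h' e => by ext; omega)
      (fun _ h => dif_pos h) (fun _ h => dif_neg h)

theorem Lmat_sub {n : ℕ} (x y : Fin n → ℝ) : Lmat (x - y) = Lmat x - Lmat y := by
  ext i j; simp only [Lmat, Matrix.of_apply, Matrix.sub_apply, Pi.sub_apply]; split_ifs <;> simp

theorem Rmat_sub {n : ℕ} (x y : Fin n → ℝ) : Rmat (x - y) = Rmat x - Rmat y := by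
  ext i j; simp only [Rmat, Matrix.of_apply, Matrix.sub_apply, Pi.sub_apply]; split_ifs <;> simp

theorem L0mat_sub {n : ℕ} (x y : Fin n → ℝ) : L0mat (x - y) = L0mat x - L0mat y := by
  ext i j; simp only [L0mat, Matrix.of_apply, Matrix.sub_apply, Pi.sub_apply]; split_ifs <;> simp

theorem R0mat_sub {n : ℕ} (x y : Fin n → ℝ) : R0mat (x - y) = R0mat x - R0mat y := by
  ext i j; simp only [R0mat, Matrix.of_apply, Matrix.sub_apply, Pi.sub_apply]; split_ifs <;> simp

theorem matNorm2_nonneg {n : ℕ} (A : Matrix (Fin n) (Fin n) ℝ) : 0 ≤ matNorm2 A := norm_nonneg _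

theorem matNorm2_add_le {n : ℕ} (A B : Matrix (Fin n) (Fin n) ℝ) :
    matNorm2 (A + B) ≤ matNorm2 A + matNorm2 B := by
  unfold matNorm2; rw [map_add]; exact norm_add_le _ _

theorem matNorm2_sub_le {n : ℕ} (A B : Matrix (Fin n) (Fin n) ℝ) :
    matNorm2 (A - B) ≤ matNorm2 A + matNorm2 B := by
  unfold matNorm2; rw [map_sub]; exact norm_sub_le _ _

theorem matNorm2_mul_le {n : ℕ} (A B : Matrix (Fin n) (Fin n) ℝ) :
    matNorm2 (A * B) ≤ matNorm2 A * matNorm2 B := by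
  unfold matNorm2; rw [map_mul]; exact norm_mul_le _ _

theorem matNorm2_smul {n : ℕ} (c : ℝ) (A : Matrix (Fin n) (Fin n) ℝ) :
    matNorm2 (c • A) = |c| * matNorm2 A := by
  unfold matNorm2; rw [map_smul, norm_smul, Real.norm_eq_abs]

/-- Perturbation of a scaled product `a • (P * Q)`. The bounds on the factors are those satisfied
by Toeplitz factors with generating vectors of `ℓ¹` norms `p` and `q`; the scalar `d` is the
relative error of the perturbed scalar. -/
theorem norm_prod_diff_le {n : ℕ} (P Q P' Q' : Matrix (Fin n) (Fin n) ℝ) (a a' p q ε d : ℝ)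
    (hε : 0 ≤ ε) (hd : 0 ≤ d) (hp : 0 ≤ p)
    (hP : matNorm2 P ≤ p) (hP' : matNorm2 P' ≤ (1 + ε) * p) (hQ' : matNorm2 Q' ≤ (1 + ε) * q)
    (hPP : matNorm2 (P' - P) ≤ ε * p) (hQQ : matNorm2 (Q' - Q) ≤ ε * q)
    (ha : |a - a'| = d * |a|) :
    matNorm2 (a • (P * Q) - a' • (P' * Q')) ≤
      |a| * (ε + (ε + (1 + ε) * d) * (1 + ε)) * (p * q) := by
  have e : a • (P * Q) - a' • (P' * Q') =
      ((a - a') • P' - a • (P' - P)) * Q' - a • (P * (Q' - Q)) := by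
    simp only [Matrix.sub_mul, Matrix.mul_sub, smul_sub, sub_smul, Matrix.smul_mul]
    abel
  rw [e]
  have hA : matNorm2 ((a - a') • P' - a • (P' - P)) ≤ |a| * (ε + (1 + ε) * d) * p := by
    refine (matNorm2_sub_le _ _).trans ?_
    rw [matNorm2_smul, matNorm2_smul, ha]
    calc _ ≤ d * |a| * ((1 + ε) * p) + |a| * (ε * p) := by gcongr
      _ = _ := by ring
  have hB : matNorm2 (P * (Q' - Q)) ≤ p * (ε * q) :=
    (matNorm2_mul_le _ _).trans (mul_le_mul hP hQQ (matNorm2_nonneg _) hp)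
  refine (matNorm2_sub_le _ _).trans ?_
  rw [matNorm2_smul]
  calc _ ≤ |a| * (ε + (1 + ε) * d) * p * ((1 + ε) * q) + |a| * (p * (ε * q)) := by
        refine add_le_add ((matNorm2_mul_le _ _).trans
          (mul_le_mul hA hQ' (matNorm2_nonneg _) (by positivity))) (by gcongr)
    _ = _ := by ring

/-- The `ℓ¹` norm of a column of `A` is at most `√n ‖A‖₂`. -/
theorem vecNorm1_le_of_mulVec_single {n : ℕ} (A : Matrix (Fin n) (Fin n) ℝ) (x : Fin n → ℝ)
    (k : Fin n) (h : A.mulVec (Pi.single k 1) = x) :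
    vecNorm1 x ≤ Real.sqrt n * matNorm2 A := by
  have h1 : ‖WithLp.toLp 2 x‖ ≤ matNorm2 A := by
    have := (Matrix.toEuclideanCLM (𝕜 := ℝ) A).le_opNorm (WithLp.toLp 2 (Pi.single k 1))
    rw [Matrix.toEuclideanCLM_toLp, h] at this
    simpa [matNorm2] using this
  have h2 : vecNorm1 x ^ 2 ≤ n * ‖WithLp.toLp 2 x‖ ^ 2 := by
    rw [EuclideanSpace.norm_sq_eq]
    simpa [vecNorm1] using sq_sum_le_card_mul_sum_sq (s := Finset.univ) (f := fun i => |x i|)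
  calc vecNorm1 x ≤ Real.sqrt n * ‖WithLp.toLp 2 x‖ := by
        refine le_of_sq_le_sq ?_ (by positivity)
        rwa [mul_pow, Real.sq_sqrt (by positivity)]
    _ ≤ _ := by gcongr

theorem vecNorm1_le_of_sub {n : ℕ} (x xt : Fin n → ℝ) (ε : ℝ)
    (h : vecNorm1 (xt - x) ≤ ε * vecNorm1 x) : vecNorm1 xt ≤ (1 + ε) * vecNorm1 x := by
  have : vecNorm1 xt ≤ vecNorm1 (xt - x) + vecNorm1 x := by
    unfold vecNorm1
    rw [← Finset.sum_add_distrib]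
    refine Finset.sum_le_sum fun i _ => ?_
    simpa using abs_add_le (xt i - x i) (x i)
  linarith

/-- Theorem 3.2, spectral-norm relative error bound for the inverse via the
Gohberg–Semencul formula. -/
theorem gsf_rel_error_norm2 {n : ℕ} [NeZero n] (T : Matrix (Fin n) (Fin n) ℝ)
    (hT : IsUnit T) (x y xt yt : Fin n → ℝ)
    (hTx : T.mulVec x = Pi.single 0 1)
    (hTy : T.mulVec y = Pi.single (lastIdx n) 1)
    (hx : x 0 ≠ 0) (hGSF : T⁻¹ = GSF x y)
    (hxt : xt 0 ≠ 0) (ε : ℝ) (hε : 0 < ε)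
    (h1 : vecNorm1 (xt - x) ≤ ε * vecNorm1 x)
    (h2 : vecNorm1 (yt - y) ≤ ε * vecNorm1 y)
    (εt : ℝ) (hεt : εt = |1 / x 0 - 1 / xt 0| / |1 / x 0|) :
    matNorm2 (T⁻¹ - GSF xt yt) / matNorm2 T⁻¹ ≤
      2 * Real.sqrt n / |x 0| * (ε + (ε + (1 + ε) * εt) * (1 + ε)) *
        min (vecNorm1 x) (vecNorm1 y) := by
  have hdet : IsUnit T.det := (Matrix.isUnit_iff_isUnit_det T).1 hT
  have hxm : vecNorm1 x ≤ Real.sqrt n * matNorm2 T⁻¹ := by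
    refine vecNorm1_le_of_mulVec_single _ _ 0 ?_
    rw [← hTx, Matrix.mulVec_mulVec, Matrix.nonsing_inv_mul _ hdet, Matrix.one_mulVec]
  have hym : vecNorm1 y ≤ Real.sqrt n * matNorm2 T⁻¹ := by
    refine vecNorm1_le_of_mulVec_single _ _ (lastIdx n) ?_
    rw [← hTy, Matrix.mulVec_mulVec, Matrix.nonsing_inv_mul _ hdet, Matrix.one_mulVec]
  have hx0 := vecNorm1_nonneg x
  have hy0 := vecNorm1_nonneg y
  have hd : 0 ≤ εt := by rw [hεt]; positivity
  have ha : |(x 0)⁻¹ - (xt 0)⁻¹| = εt * |(x 0)⁻¹| := by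
    rw [hεt, one_div, one_div, div_mul_cancel₀ _ (abs_ne_zero.2 (inv_ne_zero hx))]
  have hxt' := vecNorm1_le_of_sub x xt ε h1
  have hyt' := vecNorm1_le_of_sub y yt ε h2
  have b1 := norm_prod_diff_le (Lmat x) (Rmat y) (Lmat xt) (Rmat yt) (x 0)⁻¹ (xt 0)⁻¹
    (vecNorm1 x) (vecNorm1 y) ε εt hε.le hd hx0 (matNorm2_Lmat x)
    ((matNorm2_Lmat xt).trans hxt') ((matNorm2_Rmat yt).trans hyt')
    (by rw [← Lmat_sub]; exact (matNorm2_Lmat _).trans h1)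
    (by rw [← Rmat_sub]; exact (matNorm2_Rmat _).trans h2) ha
  have b2 := norm_prod_diff_le (L0mat y) (R0mat x) (L0mat yt) (R0mat xt) (x 0)⁻¹ (xt 0)⁻¹
    (vecNorm1 y) (vecNorm1 x) ε εt hε.le hd hy0 (matNorm2_L0mat y)
    ((matNorm2_L0mat yt).trans hyt') ((matNorm2_R0mat xt).trans hxt')
    (by rw [← L0mat_sub]; exact (matNorm2_L0mat _).trans h2)
    (by rw [← R0mat_sub]; exact (matNorm2_R0mat _).trans h1) ha
  have b : matNorm2 (T⁻¹ - GSF xt yt) ≤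
      2 * |(x 0)⁻¹| * (ε + (ε + (1 + ε) * εt) * (1 + ε)) * (vecNorm1 x * vecNorm1 y) := by
    have e : T⁻¹ - GSF xt yt =
        ((x 0)⁻¹ • (Lmat x * Rmat y) - (xt 0)⁻¹ • (Lmat xt * Rmat yt)) -
        ((x 0)⁻¹ • (L0mat y * R0mat x) - (xt 0)⁻¹ • (L0mat yt * R0mat xt)) := by
      rw [hGSF]; unfold GSF; simp only [smul_sub]; abel
    rw [e]
    refine (matNorm2_sub_le _ _).trans ((add_le_add b1 b2).trans (le_of_eq ?_))
    ring
  have hm : 0 ≤ min (vecNorm1 x) (vecNorm1 y) := le_min hx0 hy0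
  refine div_le_of_le_mul₀ (matNorm2_nonneg _) (by positivity) (b.trans ?_)
  calc _ = 2 * |(x 0)⁻¹| * (ε + (ε + (1 + ε) * εt) * (1 + ε)) *
        (min (vecNorm1 x) (vecNorm1 y) * max (vecNorm1 x) (vecNorm1 y)) := by
        rw [min_mul_max]
    _ ≤ 2 * |(x 0)⁻¹| * (ε + (ε + (1 + ε) * εt) * (1 + ε)) *
        (min (vecNorm1 x) (vecNorm1 y) * (Real.sqrt n * matNorm2 T⁻¹)) := by
        gcongr
        exact max_le hxm hym
    _ = _ := by rw [abs_inv, div_eq_mul_inv]; ring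

end
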